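/- For all real numbers x ≥ 1 and y with x^(1/2)/2 ≤ y ≤ x, one has 6·y^(1/2) + 36·(x − y)^(3/4) ≤ 36·x^(3/4). -/

import Mathlib

/-!
By concavity of `t ↦ t ^ q`, removing a tail of length `y` from an interval of length `x` lowers
the bound `b * x ^ q` by at least `b * q * x ^ (q - 1) * y`. This pays for the cost `a * y ^ p` of
the tail as soon as `a * x ^ (1 - q) ≤ b * q * y ^ (1 - p)`, so tails of length at least
`c * x ^ s` are affordable when `s * (1 - p) = 1 - q` and `a ≤ b * q * c ^ (1 - p)`.
For `p = 1 / 2`, `q = 3 / 4` the exponent `s` is `1 / 2`.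
-/

theorem sub_rpow_le_rpow_sub_mul {q x y : ℝ} (hq₀ : 0 ≤ q) (hq₁ : q ≤ 1) (hx : 0 < x)
    (hyx : y ≤ x) : (x - y) ^ q ≤ x ^ q - q * x ^ (q - 1) * y := by
  have hratio : -1 ≤ -(y / x) := neg_le_neg ((div_le_one hx).2 hyx)
  calc
    (x - y) ^ q = (x * (1 + -(y / x))) ^ q := by congr 1; field_simp; ring
    _ = x ^ q * (1 + -(y / x)) ^ q := Real.mul_rpow hx.le (by linarith)
    _ ≤ x ^ q * (1 + q * -(y / x)) := by
      gcongr
      exact rpow_one_add_le_one_add_mul_self hratio hq₀ hq₁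
    _ = x ^ q - q * x ^ (q - 1) * y := by rw [Real.rpow_sub_one hx.ne']; ring

theorem mul_rpow_le_mul_rpow_sub_one_mul {a k p q x y : ℝ} (hx : 0 < x) (hy : 0 ≤ y)
    (h : a * x ^ (1 - q) ≤ k * y ^ (1 - p)) : a * y ^ p ≤ k * x ^ (q - 1) * y := by
  have hx_cancel : x ^ (1 - q) * x ^ (q - 1) = 1 := by
    rw [← Real.rpow_add hx, sub_add_sub_cancel, sub_self, Real.rpow_zero]
  have hy_split : y ^ (1 - p) * y ^ p = y := by
    rw [← Real.rpow_add' hy (by simp), sub_add_cancel, Real.rpow_one]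
  calc
    a * y ^ p = a * x ^ (1 - q) * (x ^ (q - 1) * y ^ p) := by
      linear_combination -(a * y ^ p) * hx_cancel
    _ ≤ k * y ^ (1 - p) * (x ^ (q - 1) * y ^ p) := by gcongr
    _ = k * x ^ (q - 1) * y := by linear_combination k * x ^ (q - 1) * hy_split

theorem rpow_mul_rpow_mul_le_rpow {c r s x y : ℝ} (hc : 0 ≤ c) (hr : 0 ≤ r) (hx : 0 ≤ x)
    (h : c * x ^ s ≤ y) : c ^ r * x ^ (s * r) ≤ y ^ r := by
  rw [Real.rpow_mul hx, ← Real.mul_rpow hc (by positivity)]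
  gcongr

theorem eflh_induction_step_basic_general {a b c p q s x y : ℝ} (hb : 0 ≤ b) (hc : 0 ≤ c)
    (hp : p ≤ 1) (hq₀ : 0 ≤ q) (hq₁ : q ≤ 1) (hs : s * (1 - p) = 1 - q)
    (ha : a ≤ b * q * c ^ (1 - p)) (hx : 0 < x) (hy₁ : c * x ^ s ≤ y) (hy₂ : y ≤ x) :
    a * y ^ p + b * (x - y) ^ q ≤ b * x ^ q := by
  have hy : 0 ≤ y := le_trans (by positivity) hy₁
  have hlong : a * x ^ (1 - q) ≤ b * q * y ^ (1 - p) := calc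
    a * x ^ (1 - q) ≤ b * q * c ^ (1 - p) * x ^ (1 - q) := by gcongr
    _ = b * q * (c ^ (1 - p) * x ^ (s * (1 - p))) := by rw [hs, mul_assoc]
    _ ≤ b * q * y ^ (1 - p) := by
      gcongr
      exact rpow_mul_rpow_mul_le_rpow hc (sub_nonneg.2 hp) hx.le hy₁
  calc
    a * y ^ p + b * (x - y) ^ q
      ≤ b * q * x ^ (q - 1) * y + b * (x ^ q - q * x ^ (q - 1) * y) :=
        add_le_add (mul_rpow_le_mul_rpow_sub_one_mul hx hy hlong)
          (mul_le_mul_of_nonneg_left (sub_rpow_le_rpow_sub_mul hq₀ hq₁ hx hy₂) hb)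
    _ = b * x ^ q := by ring

/-- The induction-step inequality in the proof of Theorem 3.1 of the paper. -/
theorem eflh_induction_step_basic (x y : ℝ) (hx : 1 ≤ x)
    (hy₁ : x ^ ((1 : ℝ) / 2) / 2 ≤ y) (hy₂ : y ≤ x) :
    6 * y ^ ((1 : ℝ) / 2) + 36 * (x - y) ^ ((3 : ℝ) / 4) ≤
      36 * x ^ ((3 : ℝ) / 4) := by
  have hhalf : (1 / 2 : ℝ) ≤ (1 / 2) ^ (1 - 1 / 2 : ℝ) :=
    Real.self_le_rpow_of_le_one (by norm_num) (by norm_num) (by norm_num)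
  exact eflh_induction_step_basic_general (c := 1 / 2) (s := 1 / 2) (hb := by norm_num)
    (hc := by norm_num) (hp := by norm_num) (hq₀ := by norm_num) (hq₁ := by norm_num)
    (hs := by norm_num) (ha := by linarith) (hx := by linarith) (hy₁ := by linarith) hy₂
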